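/- Let T be a triangulated category, K a thick subcategory, and F : T → T/K the Verdier quotient functor. Then the map Q ↦ F^{-1}(Q) is an order isomorphism from the lattice of thick subcategories of T/K onto the lattice of thick subcategories of T containing K. Moreover, under this bijection, Q is a prime thick subcategory of T/K if and only if F^{-1}(Q) is a prime thick subcategory of T. -/

import Mathlib

open CategoryTheory Limits Pretriangulated

universe v u

variable (C : Type u) [Category.{v} C] [Preadditive C] [HasZeroObject C]
  [HasShift C ℤ] [∀ n : ℤ, (shiftFunctor C n).Additive] [Pretriangulated C]

/-- A thick subcategory of a (pre)triangulated category, modelled as a set of objects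
closed under isomorphisms, zero objects, shifts, extensions and direct summands. -/
structure ThickSubcat : Type (max u v) where
  set : Set C
  mem_of_iso : ∀ {X Y : C}, (X ≅ Y) → X ∈ set → Y ∈ set
  zero_mem : ∀ Z : C, IsZero Z → Z ∈ set
  shift_mem : ∀ (X : C) (n : ℤ), X ∈ set → X⟦n⟧ ∈ set
  ext_mem : ∀ T : Triangle C, T ∈ (distTriang C) → T.obj₁ ∈ set → T.obj₃ ∈ set → T.obj₂ ∈ set
  summand_mem : ∀ (X Y : C) (i : Y ⟶ X) (r : X ⟶ Y), i ≫ r = 𝟙 Y → X ∈ set → Y ∈ set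

lemma ThickSubcat.set_injective : Function.Injective (ThickSubcat.set (C := C)) := by
  rintro ⟨s, _, _, _, _, _⟩ ⟨t, _, _, _, _, _⟩ h
  cases h; rfl

instance : PartialOrder (ThickSubcat C) :=
  PartialOrder.lift ThickSubcat.set (ThickSubcat.set_injective C)

/-- A thick subcategory `P` is *prime* if there is a unique minimal element among the
thick subcategories properly containing `P`. -/
def IsPrimeThick (P : ThickSubcat C) : Prop :=
  ∃! X : ThickSubcat C, Minimal (fun Y : ThickSubcat C => P < Y) X

/-- The spectrum: the set of prime thick subcategories. -/
def SpecTri := {P : ThickSubcat C // IsPrimeThick C P}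

/-- The support of an object `M`. -/
def suppObj (M : C) : Set (SpecTri C) := {P | M ∉ P.1.set}

/-- The topology on the spectrum, with closed basis the supports `suppObj M`. -/
instance : TopologicalSpace (SpecTri C) :=
  TopologicalSpace.generateFrom {U | ∃ M : C, U = (suppObj C M)ᶜ}

/-- The class of morphisms of `C` whose cone lies in the thick subcategory `K`. -/
def coneInK (K : ThickSubcat C) : MorphismProperty C :=
  fun X Y f => ∃ (Z : C) (g : Y ⟶ Z) (h : Z ⟶ X⟦(1 : ℤ)⟧),
    Triangle.mk f g h ∈ (distTriang C) ∧ Z ∈ K.set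

section Helpers

open scoped ZeroObject

variable {C}

section Wrap

variable {X Y Z X' Y' Z' A : C} {f : X ⟶ Y} {g : Y ⟶ Z} {h : Z ⟶ X⟦(1 : ℤ)⟧}
  {f' : X' ⟶ Y'} {g' : Y' ⟶ Z'} {h' : Z' ⟶ X'⟦(1 : ℤ)⟧}

lemma wr_tr3 (H : Triangle.mk f g h ∈ distTriang C) (H' : Triangle.mk f' g' h' ∈ distTriang C)
    (a : X ⟶ X') (b : Y ⟶ Y') (e : f ≫ b = a ≫ f') :
    ∃ c : Z ⟶ Z', g ≫ c = b ≫ g' ∧ h ≫ a⟦(1 : ℤ)⟧' = c ≫ h' :=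
  complete_distinguished_triangle_morphism _ _ H H' a b e

lemma wr_tr3₂ (H : Triangle.mk f g h ∈ distTriang C) (H' : Triangle.mk f' g' h' ∈ distTriang C)
    (a : X ⟶ X') (c : Z ⟶ Z') (e : h ≫ a⟦(1 : ℤ)⟧' = c ≫ h') :
    ∃ b : Y ⟶ Y', f ≫ b = a ≫ f' ∧ g ≫ c = b ≫ g' :=
  complete_distinguished_triangle_morphism₂ _ _ H H' a c e

lemma wr_z12 (H : Triangle.mk f g h ∈ distTriang C) : f ≫ g = 0 :=
  comp_distTriang_mor_zero₁₂ _ H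

lemma wr_z31 (H : Triangle.mk f g h ∈ distTriang C) : h ≫ f⟦(1 : ℤ)⟧' = 0 :=
  comp_distTriang_mor_zero₃₁ _ H

lemma wr_co1 (H : Triangle.mk f g h ∈ distTriang C) (s : A ⟶ X⟦(1 : ℤ)⟧)
    (e : s ≫ f⟦(1 : ℤ)⟧' = 0) : ∃ t : A ⟶ Z, s = t ≫ h :=
  Triangle.coyoneda_exact₁ _ H s e

lemma wr_co2 (H : Triangle.mk f g h ∈ distTriang C) (s : A ⟶ Y)
    (e : s ≫ g = 0) : ∃ t : A ⟶ X, s = t ≫ f :=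
  Triangle.coyoneda_exact₂ _ H s e

lemma wr_co3 (H : Triangle.mk f g h ∈ distTriang C) (s : A ⟶ Z)
    (e : s ≫ h = 0) : ∃ t : A ⟶ Y, s = t ≫ g :=
  Triangle.coyoneda_exact₃ _ H s e

lemma wr_yo2 (H : Triangle.mk f g h ∈ distTriang C) (s : Y ⟶ A)
    (e : f ≫ s = 0) : ∃ t : Z ⟶ A, s = g ≫ t :=
  Triangle.yoneda_exact₂ _ H s e

end Wrap

namespace ThickSubcat

variable (K : ThickSubcat C)

/-- The thick subcategory as an object property. -/
def prop : ObjectProperty C := fun X => X ∈ K.set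

lemma mem_of_shift {X : C} (n : ℤ) (h : X⟦n⟧ ∈ K.set) : X ∈ K.set :=
  K.mem_of_iso ((shiftEquiv C n).unitIso.app X).symm (K.shift_mem _ (-n) h)

instance : K.prop.IsClosedUnderIsomorphisms where
  of_iso e h := K.mem_of_iso e h

instance : K.prop.IsTriangulated where
  exists_zero := ⟨0, isZero_zero C, K.zero_mem _ (isZero_zero C)⟩
  isStableUnderShiftBy n := { le_shift := fun X h => K.shift_mem X n h }
  toIsTriangulatedClosed₂ := .mk' (fun T hT h₁ h₃ => K.ext_mem T hT h₁ h₃)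

lemma biprod_mem {X Y : C} (hX : X ∈ K.set) (hY : Y ∈ K.set) : (X ⊞ Y) ∈ K.set :=
  K.ext_mem _ (binaryBiproductTriangle_distinguished X Y) hX hY

/-- The morphism `f` factors through an object of `K`. -/
def Fac {A B : C} (f : A ⟶ B) : Prop :=
  ∃ (k : C) (a : A ⟶ k) (b : k ⟶ B), k ∈ K.set ∧ f = a ≫ b

lemma Fac.add {A B : C} {f g : A ⟶ B} (hf : K.Fac f) (hg : K.Fac g) : K.Fac (f + g) := by
  obtain ⟨k, a, b, hk, rfl⟩ := hf
  obtain ⟨k', a', b', hk', rfl⟩ := hg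
  exact ⟨k ⊞ k', biprod.lift a a', biprod.desc b b', K.biprod_mem hk hk', by simp⟩

lemma mem_of_fac {A : C} (h : K.Fac (𝟙 A)) : A ∈ K.set := by
  obtain ⟨k, a, b, hk, h⟩ := h
  exact K.summand_mem k A a b h.symm hk

lemma Fac.of_restrict {A' A k B : C} {t : A' ⟶ A} {j : A ⟶ k} {d : k ⟶ A'⟦(1 : ℤ)⟧}
    (hT : Triangle.mk t j d ∈ distTriang C) (h₃ : k ∈ K.set)
    (f : A ⟶ B) (h : K.Fac (t ≫ f)) : K.Fac f := by
  obtain ⟨k', α, β, hk', fac⟩ := h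
  obtain ⟨P, i, p, hP⟩ := distinguished_cocone_triangle₂ (d ≫ α⟦(1 : ℤ)⟧')
  obtain ⟨b, hb, -⟩ := wr_tr3₂ hT hP α (𝟙 _) (by simp)
  obtain ⟨γ, hγ, -⟩ := wr_tr3₂ (f' := 𝟙 B) (g' := (0 : B ⟶ 0)) (h' := 0) hP
    (contractible_distinguished B) β 0 (by
      rw [Category.assoc, ← Functor.map_comp, ← fac, Functor.map_comp,
        reassoc_of% (wr_z31 hT), zero_comp, zero_comp])
  rw [Category.comp_id] at hγ
  obtain ⟨q, hq⟩ := wr_yo2 hT (f - b ≫ γ) (by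
    rw [Preadditive.comp_sub, fac, reassoc_of% hb, hγ, sub_self])
  have hf : f = b ≫ γ + j ≫ q := by rw [← hq]; abel
  rw [hf]
  exact Fac.add K ⟨P, b, γ, K.ext_mem _ hP hk' h₃, rfl⟩ ⟨_, _, _, h₃, rfl⟩

lemma trW_comp {X Y Z : C} (f : X ⟶ Y) (g : Y ⟶ Z) (hf : K.prop.trW f) (hg : K.prop.trW g) :
    K.prop.trW (f ≫ g) := by
  obtain ⟨k₁, p₁, q₁, H₁, hk₁⟩ := hf
  obtain ⟨k₂, p₂, q₂, H₂, hk₂⟩ := hg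
  obtain ⟨c, v, w, H⟩ := distinguished_cocone_triangle (f ≫ g)
  refine ⟨c, v, w, H, K.mem_of_fac ?_⟩
  obtain ⟨a, ha₁, ha₂⟩ := wr_tr3 H₁ H (𝟙 X) g (by simp)
  obtain ⟨b, hb₁, hb₂⟩ := wr_tr3 H H₂ f (𝟙 Z) (by simp)
  simp only [CategoryTheory.Functor.map_id, Category.comp_id, Category.id_comp] at ha₁ ha₂ hb₁ hb₂
  obtain ⟨c', t, d, Hc⟩ := distinguished_cocone_triangle₁ b
  have htb : t ≫ b = 0 := wr_z12 Hc
  refine Fac.of_restrict K Hc hk₂ _ ?_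
  rw [Category.comp_id]
  obtain ⟨s, hs⟩ := wr_co1 H₁ (t ≫ w) (by
    rw [Category.assoc, hb₂, reassoc_of% htb, zero_comp])
  obtain ⟨r, hr⟩ := wr_co3 H (t - s ≫ a) (by
    rw [Preadditive.sub_comp, hs, Category.assoc, ← ha₂, sub_self])
  obtain ⟨c'', t', d', Hc'⟩ := distinguished_cocone_triangle₁ (r ≫ p₂)
  have ht' : t' ≫ r ≫ p₂ = 0 := wr_z12 Hc'
  refine Fac.of_restrict K Hc' hk₂ _ ?_
  obtain ⟨r', hr'⟩ := wr_co2 H₂ (t' ≫ r) (by simpa using ht')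
  refine ⟨k₁, t' ≫ s + r' ≫ p₁, a, hk₁, ?_⟩
  have ht : t = s ≫ a + r ≫ v := by rw [← hr]; abel
  rw [ht, Preadditive.comp_add, Preadditive.add_comp, reassoc_of% hr', Category.assoc,
    Category.assoc, ha₁]

instance : K.prop.trW.IsMultiplicative where
  comp_mem f g hf hg := K.trW_comp f g hf hg

instance : K.prop.trW.HasLeftCalculusOfFractions where
  exists_leftFraction X Y φ := by
    obtain ⟨Z, f, g, H, mem⟩ := φ.hs
    obtain ⟨Y', s', f', mem'⟩ := distinguished_cocone_triangle₂ (g ≫ φ.f⟦1⟧')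
    obtain ⟨b, ⟨hb₁, _⟩⟩ :=
      wr_tr3₂ H mem' φ.f (𝟙 Z) (by simp)
    exact ⟨MorphismProperty.LeftFraction.mk b s' ⟨_, _, _, mem', mem⟩, hb₁.symm⟩
  ext := by
    rintro X' X Y f₁ f₂ s ⟨Z, g, h, H, mem⟩ hf₁
    have hf₂ : s ≫ (f₁ - f₂) = 0 := by rw [Preadditive.comp_sub, hf₁, sub_self]
    obtain ⟨q, hq⟩ := wr_yo2 H _ hf₂
    obtain ⟨Y', r, t, mem'⟩ := distinguished_cocone_triangle q
    refine ⟨Y', r, ?_, ?_⟩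
    · exact ⟨_, _, _, rot_of_distTriang _ mem', K.prop.le_shift _ _ mem⟩
    · have eq := wr_z12 mem'
      rw [← sub_eq_zero, ← Preadditive.sub_comp, hq, Category.assoc, eq, comp_zero]

lemma coneInK_eq : coneInK C K = K.prop.trW := by
  ext X Y f
  constructor
  · rintro ⟨Z, g, h, H, m⟩
    exact ⟨Z, g, h, H, m⟩
  · rintro ⟨Z, g, h, H, m⟩
    exact ⟨Z, g, h, H, m⟩

variable {D : Type*} [Category D] [Preadditive D] [HasZeroObject D]
    [HasShift D ℤ] [∀ n : ℤ, (shiftFunctor D n).Additive] [Pretriangulated D]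
    (F : C ⥤ D) [F.CommShift ℤ] [F.IsTriangulated]

/-- Inverse image. -/
def comap (Q : ThickSubcat D) : ThickSubcat C where
  set := F.obj ⁻¹' Q.set
  mem_of_iso e h := Q.mem_of_iso (F.mapIso e) h
  zero_mem Z hZ := Q.zero_mem _ (F.map_isZero hZ)
  shift_mem X n h := Q.mem_of_iso ((F.commShiftIso n).app X).symm (Q.shift_mem _ n h)
  ext_mem T hT h₁ h₃ := Q.ext_mem _ (F.map_distinguished T hT) h₁ h₃
  summand_mem X Y i r h hX := Q.summand_mem _ _ (F.map i) (F.map r)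
    (by rw [← F.map_comp, h, F.map_id]) hX

variable [F.IsLocalization K.prop.trW]

lemma isZero_iff (X : C) : IsZero (F.obj X) ↔ X ∈ K.set := by
  constructor
  · intro h
    obtain ⟨Z, s, hs, fac⟩ := (MorphismProperty.map_eq_iff_postcomp F K.prop.trW
      (𝟙 X) 0).1 (h.eq_of_src _ _)
    rw [Category.id_comp, zero_comp] at fac
    subst fac
    obtain ⟨k, p, q, H, hk⟩ := hs
    obtain ⟨r, hr⟩ := wr_co1 H (𝟙 (X⟦(1 : ℤ)⟧)) (by simp)
    exact K.mem_of_shift 1 (K.summand_mem _ _ r q hr.symm hk)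
  · intro h
    have h1 : K.prop.trW (0 : (0 : C) ⟶ X) :=
      ⟨X, 𝟙 X, 0, contractible_distinguished₁ X, h⟩
    have := Localization.inverts F K.prop.trW _ h1
    exact (F.map_isZero (isZero_zero C)).of_iso (asIso (F.map (0 : (0 : C) ⟶ X))).symm

lemma le_comap (Q : ThickSubcat D) : K ≤ Q.comap F :=
  fun X hX => Q.zero_mem _ ((K.isZero_iff F X).2 hX)

lemma mem_of_obj_iso (X : ThickSubcat C) (hX : K ≤ X) {Y Z : C} (e : F.obj Y ≅ F.obj Z)
    (hZ : Z ∈ X.set) : Y ∈ X.set := by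
  obtain ⟨φ, hφ⟩ := Localization.exists_leftFraction F K.prop.trW e.hom
  have hs := Localization.inverts F K.prop.trW _ φ.hs
  have h1 : IsIso (F.map φ.f) := by
    have := φ.map_comp_map_s F (Localization.inverts F K.prop.trW)
    rw [← hφ] at this
    rw [← this]
    infer_instance
  obtain ⟨k, p, q, H, hk⟩ := φ.hs
  have hY' : φ.Y' ∈ X.set := X.ext_mem _ H hZ (hX hk)
  obtain ⟨c, v, w, Hc⟩ := distinguished_cocone_triangle φ.f
  have hc : c ∈ X.set := by
    refine hX ((K.isZero_iff F c).1 ?_)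
    exact (Triangle.isZero₃_iff_isIso₁ _ (F.map_distinguished _ Hc)).2 h1
  exact X.prop.ext_of_isTriangulatedClosed₁ _ Hc hY' hc

/-- Image of a thick subcategory containing `K`. -/
def image (X : ThickSubcat C) (hX : K ≤ X) : ThickSubcat D where
  set := {A | ∃ Y ∈ X.set, Nonempty (F.obj Y ≅ A)}
  mem_of_iso := by
    rintro A B e ⟨Y, hY, ⟨e'⟩⟩
    exact ⟨Y, hY, ⟨e' ≪≫ e⟩⟩
  zero_mem Z hZ := ⟨0, X.zero_mem _ (isZero_zero C),
    ⟨(F.map_isZero (isZero_zero C)).iso hZ⟩⟩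
  shift_mem := by
    rintro A n ⟨Y, hY, ⟨e⟩⟩
    exact ⟨_, X.shift_mem Y n hY, ⟨(F.commShiftIso n).app Y ≪≫ (shiftFunctor D n).mapIso e⟩⟩
  ext_mem := by
    rintro T hT ⟨Y₁, h₁, ⟨e₁⟩⟩ ⟨Y₃, h₃, ⟨e₃⟩⟩
    have := Localization.essSurj_mapArrow F K.prop.trW
    obtain ⟨T', e, hT'⟩ := (F.distTriang_iff T).1 hT
    exact ⟨T'.obj₂, X.ext_mem T' hT'
      (K.mem_of_obj_iso F X hX ((Triangle.π₁.mapIso e).symm ≪≫ e₁.symm) h₁)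
      (K.mem_of_obj_iso F X hX ((Triangle.π₃.mapIso e).symm ≪≫ e₃.symm) h₃),
      ⟨(Triangle.π₂.mapIso e).symm⟩⟩
  summand_mem := by
    rintro A B i r h ⟨Y, hY, ⟨e⟩⟩
    have := Localization.essSurj F K.prop.trW
    obtain ⟨Z, p, q, H⟩ := distinguished_cocone_triangle i
    have hq : q = 0 := by
      have h0 := wr_z31 H
      have : q ≫ i⟦(1 : ℤ)⟧' ≫ r⟦(1 : ℤ)⟧' = 0 := by rw [reassoc_of% h0, zero_comp]
      rwa [← Functor.map_comp, h, CategoryTheory.Functor.map_id, Category.comp_id] at this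
    obtain ⟨e', -, -⟩ := exists_iso_binaryBiproduct_of_distTriang _ H hq
    have := preservesBinaryBiproducts_of_preservesBiproducts F
    let eB := F.objObjPreimageIso B
    let eZ := F.objObjPreimageIso Z
    have hm : (F.objPreimage B ⊞ F.objPreimage Z) ∈ X.set :=
      K.mem_of_obj_iso F X hX
        (F.mapBiprod _ _ ≪≫ biprod.mapIso eB eZ ≪≫ e'.symm ≪≫ e.symm) hY
    exact ⟨F.objPreimage B, X.summand_mem _ _ biprod.inl biprod.fst (by simp) hm, ⟨eB⟩⟩

/-- The order isomorphism. -/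
def orderIso : ThickSubcat D ≃o {X : ThickSubcat C // K ≤ X} where
  toFun Q := ⟨Q.comap F, K.le_comap F Q⟩
  invFun X := K.image F X.1 X.2
  left_inv Q := by
    apply ThickSubcat.set_injective
    ext A
    constructor
    · rintro ⟨Y, hY, ⟨e⟩⟩
      exact Q.mem_of_iso e hY
    · intro hA
      have := Localization.essSurj F K.prop.trW
      exact ⟨F.objPreimage A, Q.mem_of_iso (F.objObjPreimageIso A).symm hA,
        ⟨F.objObjPreimageIso A⟩⟩
  right_inv X := by
    apply Subtype.ext
    apply ThickSubcat.set_injective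
    ext A
    constructor
    · rintro ⟨Y, hY, ⟨e⟩⟩
      exact K.mem_of_obj_iso F X.1 X.2 e.symm hY
    · intro hA
      exact ⟨A, hA, ⟨Iso.refl _⟩⟩
  map_rel_iff' := by
    intro Q Q'
    constructor
    · intro h A hA
      have := Localization.essSurj F K.prop.trW
      exact Q'.mem_of_iso (F.objObjPreimageIso A)
        (h (Q.mem_of_iso (F.objObjPreimageIso A).symm hA))
    · intro h A hA
      exact h hA

end ThickSubcat

lemma existsUnique_minimal_iff {α β : Type*} [PartialOrder α] [PartialOrder β] (k : β)
    (e : α ≃o {x : β // k ≤ x}) (q : α) :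
    (∃! x, Minimal (fun y => q < y) x) ↔
      ∃! x, Minimal (fun y => (e q : β) < y) x := by
  have key : ∀ x, Minimal (fun y => q < y) x ↔ Minimal (fun y => (e q : β) < y) (e x : β) := by
    intro x
    have hlt : ∀ a b, (e a : β) < e b ↔ a < b := fun a b => by
      rw [Subtype.coe_lt_coe, e.lt_iff_lt]
    have hle : ∀ a b, (e a : β) ≤ e b ↔ a ≤ b := fun a b => by
      rw [Subtype.coe_le_coe, e.le_iff_le]
    constructor
    · rintro ⟨h1, h2⟩
      refine ⟨(hlt _ _).2 h1, fun y hy hyx => ?_⟩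
      obtain ⟨z, hz⟩ := e.surjective ⟨y, (e q).2.trans hy.le⟩
      have hz' : y = (e z : β) := by rw [hz]
      subst hz'
      exact (hle _ _).2 (h2 ((hlt _ _).1 hy) ((hle _ _).1 hyx))
    · rintro ⟨h1, h2⟩
      exact ⟨(hlt _ _).1 h1, fun y hy hyx =>
        (hle _ _).1 (h2 ((hlt _ _).2 hy) ((hle _ _).2 hyx))⟩
  constructor
  · rintro ⟨x, hx, hu⟩
    refine ⟨e x, (key x).1 hx, fun y hy => ?_⟩
    obtain ⟨z, hz⟩ := e.surjective ⟨y, (e q).2.trans hy.1.le⟩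
    have hz' : y = (e z : β) := by rw [hz]
    subst hz'
    rw [hu z ((key z).2 hy)]
  · rintro ⟨y, hy, hu⟩
    obtain ⟨z, hz⟩ := e.surjective ⟨y, (e q).2.trans hy.1.le⟩
    have hz' : y = (e z : β) := by rw [hz]
    subst hz'
    refine ⟨z, (key z).2 hy, fun w hw => e.injective (Subtype.ext (hu _ ((key w).1 hw)))⟩

end Helpers

/-- Let `K` be a thick subcategory of `T` and `F : T → T/K` the Verdier quotient functor
(modelled as a localization at the morphisms with cone in `K`). Then `Q ↦ F⁻¹(Q)` is an
order isomorphism from the lattice of thick subcategories of `T/K` onto the lattice of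
thick subcategories of `T` containing `K`; moreover `Q` is prime in `T/K` if and only if
`F⁻¹(Q)` is prime in `T`. -/
theorem stmt9 (D : Type*) [Category D] [Preadditive D] [HasZeroObject D]
    [HasShift D ℤ] [∀ n : ℤ, (shiftFunctor D n).Additive] [Pretriangulated D]
    (K : ThickSubcat C) (F : C ⥤ D) [F.CommShift ℤ] [F.IsTriangulated] [F.Additive]
    [F.IsLocalization (coneInK C K)] :
    ∃ e : ThickSubcat D ≃o {X : ThickSubcat C // K ≤ X},
      (∀ Q : ThickSubcat D, ((e Q : {X : ThickSubcat C // K ≤ X}) : ThickSubcat C).set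
          = F.obj ⁻¹' Q.set) ∧
      (∀ Q : ThickSubcat D, IsPrimeThick D Q ↔ IsPrimeThick C (e Q : ThickSubcat C)) := by
  have hloc : F.IsLocalization K.prop.trW := by
    rw [← K.coneInK_eq]
    infer_instance
  exact ⟨K.orderIso F, fun Q => rfl, fun Q => existsUnique_minimal_iff K (K.orderIso F) Q⟩
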